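/- There is no explicit three-stage Runge–Kutta method with nonnegative coefficients (a₂₁ ≥ 0, a₃₁ ≥ 0, a₃₂ ≥ 0, b₁ ≥ 0, b₂ ≥ 0, b₃ ≥ 0, as is necessary for a positive SSP coefficient) that satisfies the third-order conditions b₁ + b₂ + b₃ = 1, b₂a₂₁ + b₃(a₃₁ + a₃₂) = 1/2, b₂a₂₁² + b₃(a₃₁ + a₃₂)² = 1/3, b₃a₃₂a₂₁ = 1/6, and is strongly stable for all semibounded Lipschitz-continuous right-hand sides, in the following sense: for every L > 0 there exists τ > 0 such that for every g : ℝ² → ℝ² with ⟨u, g(u)⟩ ≤ 0 for all u and Lipschitz constant at most L, every u₀ ∈ ℝ², and every Δt ∈ (0, τ], the step from u₀ satisfies ‖u₊‖ ≤ ‖u₀‖. -/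

import Mathlib

/-!
Identify `ℝ²` with `ℂ` and let `J` be multiplication by `i`. Every field `g u = (1 + ψ u) • J u` with
real-valued `ψ` satisfies `⟪u, g u⟫ = 0`. Starting from `u₀ = 1` with step size `h`, pick `ψ` vanishing
at the first two stages and equal to `θ` at the third one, `u₃`. With `z = i h`, `c₃ = a₃₁ + a₃₂` and
`m = a₃₂ a₂₁`, the third-order conditions give
`u₊ = 1 + z + z²/2 + z³/6 + θ b₃ z u₃` and `u₃ = 1 + c₃ z + m z²`, hence
`|u₊|² - 1 ≥ - h⁴/12 + 2 θ b₃ (h² (1 - c₃) + O(h⁴))`.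
The third stage is at distance at least `min c₃ m * h²` from the other two, so a cone-shaped bump of
this radius allows `θ = h² / (b₃ (1 - c₃))` with a Lipschitz constant independent of `h`.
Then `|u₊|² - 1 ≥ (2 - 1/12) h⁴ + O(h⁶) > 0` for small `h`.

Nonnegativity of the coefficients enters through `c₃ ≠ 1` (`third_node_ne_one`).
-/

open scoped RealInnerProductSpace

/-- One step of an explicit three-stage Runge–Kutta method with Butcher
coefficients `a21, a31, a32, b1, b2, b3` applied to the autonomous ODE
`u' = g u` with step size `Δt` from `u0`. -/
noncomputable def rk3Step (a21 a31 a32 b1 b2 b3 : ℝ)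
    (g : EuclideanSpace ℝ (Fin 2) → EuclideanSpace ℝ (Fin 2)) (Δt : ℝ)
    (u0 : EuclideanSpace ℝ (Fin 2)) : EuclideanSpace ℝ (Fin 2) :=
  let u1 := u0
  let u2 := u0 + Δt • (a21 • g u1)
  let u3 := u0 + Δt • (a31 • g u1 + a32 • g u2)
  u0 + Δt • (b1 • g u1 + b2 • g u2 + b3 • g u3)

/-- If `a₃₁ + a₃₂ = 1`, the order conditions give `b₂ (1 - a₂₁) = b₃ a₃₂ ≤ b₃ = 1/2 - b₂ a₂₁`, so
`b₂ ≤ 1/2`, whereas `b₂ a₂₁ (1 - a₂₁) = 1/6` forces `b₂ ≥ 2/3`. -/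
lemma third_node_ne_one {a21 a31 a32 b2 b3 : ℝ}
    (ha21 : 0 ≤ a21) (ha31 : 0 ≤ a31) (hb2 : 0 ≤ b2) (hb3 : 0 ≤ b3)
    (h2 : b2 * a21 + b3 * (a31 + a32) = 1 / 2)
    (h3 : b2 * a21 ^ 2 + b3 * (a31 + a32) ^ 2 = 1 / 3)
    (h4 : b3 * a32 * a21 = 1 / 6) : a31 + a32 ≠ 1 := by
  intro hc
  rw [hc] at h2 h3
  have hne : a21 ≠ 0 := by
    rintro rfl
    norm_num at h4
  have e1 : b2 * (1 - a21) = b3 * a32 := by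
    apply mul_right_cancel₀ hne
    linarith
  have e2 : b3 * a32 ≤ b3 * 1 := mul_le_mul_of_nonneg_left (by linarith) hb3
  have e3 : b2 ≤ 1 / 2 := by linarith
  nlinarith [mul_nonneg hb2 (sq_nonneg (a21 - 1 / 2))]

/-- Rotation of the plane by a right angle. -/
noncomputable def rot (u : EuclideanSpace ℝ (Fin 2)) : EuclideanSpace ℝ (Fin 2) := !₂[-u 1, u 0]

lemma inner_rot (u : EuclideanSpace ℝ (Fin 2)) : ⟪u, rot u⟫ = 0 := by
  simp [rot, PiLp.inner_apply, Fin.sum_univ_two]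
  ring

lemma norm_rot (u : EuclideanSpace ℝ (Fin 2)) : ‖rot u‖ = ‖u‖ := by
  rw [EuclideanSpace.norm_eq, EuclideanSpace.norm_eq]
  simp [rot, Fin.sum_univ_two, add_comm]

lemma rot_sub (u v : EuclideanSpace ℝ (Fin 2)) : rot (u - v) = rot u - rot v := by
  ext i
  fin_cases i
  · simp [rot]
    ring
  · simp [rot]

/-- Multiplying `rot` by `1 + ψ` with `ψ` bounded, Lipschitz and of bounded support keeps it
Lipschitz. -/
lemma lipschitz_rot_field {ψ : EuclideanSpace ℝ (Fin 2) → ℝ} {Λ B M : ℝ}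
    (hM : 0 ≤ M)
    (hlip : ∀ u v, |ψ u - ψ v| ≤ Λ * ‖u - v‖) (hbd : ∀ u, |ψ u| ≤ B)
    (hsupp : ∀ u, ψ u ≠ 0 → ‖u‖ ≤ M) (u v : EuclideanSpace ℝ (Fin 2)) :
    ‖(1 + ψ u) • rot u - (1 + ψ v) • rot v‖ ≤ (1 + B + Λ * M) * ‖u - v‖ := by
  have hΛ : 0 ≤ Λ * ‖u - v‖ := (abs_nonneg _).trans (hlip u v)
  have key : ∀ x y : EuclideanSpace ℝ (Fin 2), ψ y = 0 ∨ ‖y‖ ≤ M →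
      |ψ x - ψ y| ≤ Λ * ‖u - v‖ → ‖x - y‖ = ‖u - v‖ → (ψ y = 0 → ψ x = 0) →
      ‖(1 + ψ x) • rot x - (1 + ψ y) • rot y‖ ≤ (1 + B + Λ * M) * ‖u - v‖ := by
    intro x y hy hxy hn h0
    have e : (1 + ψ x) • rot x - (1 + ψ y) • rot y
        = rot (x - y) + ψ x • rot (x - y) + (ψ x - ψ y) • rot y := by
      rw [rot_sub]
      module
    have t1 : |ψ x| * ‖u - v‖ ≤ B * ‖u - v‖ :=
      mul_le_mul_of_nonneg_right (hbd x) (norm_nonneg _)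
    have t2 : |ψ x - ψ y| * ‖y‖ ≤ Λ * ‖u - v‖ * M := by
      by_cases hz : ψ y = 0
      · rw [h0 hz, hz]
        simpa using mul_nonneg hΛ hM
      · exact mul_le_mul hxy (hy.resolve_left hz) (norm_nonneg _) hΛ
    calc ‖(1 + ψ x) • rot x - (1 + ψ y) • rot y‖
        ≤ ‖rot (x - y)‖ + ‖ψ x • rot (x - y)‖ + ‖(ψ x - ψ y) • rot y‖ := by
          rw [e]
          exact norm_add₃_le
      _ = ‖u - v‖ + |ψ x| * ‖u - v‖ + |ψ x - ψ y| * ‖y‖ := by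
          simp only [norm_smul, norm_rot, Real.norm_eq_abs, hn]
      _ ≤ (1 + B + Λ * M) * ‖u - v‖ := by linarith
  -- By symmetry, `ψ v` may be taken nonzero unless both values vanish.
  by_cases hv : ψ v = 0
  · by_cases hu : ψ u = 0
    · exact key u v (Or.inl hv) (hlip u v) rfl (fun _ => hu)
    · rw [norm_sub_rev]
      refine key v u (Or.inr (hsupp u hu)) ?_ (norm_sub_rev _ _) (fun h => absurd h hu)
      rw [abs_sub_comm]
      exact hlip u v
  · exact key u v (Or.inr (hsupp v hv)) (hlip u v) rfl (fun h => absurd h hv)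

/-- The cone of slope `l` and radius `R` over the ball around `p`. -/
noncomputable def cone (l R : ℝ) (p u : EuclideanSpace ℝ (Fin 2)) : ℝ := l * max 0 (R - ‖u - p‖)

lemma cone_eq_zero {l R : ℝ} {p u : EuclideanSpace ℝ (Fin 2)} (h : R ≤ ‖u - p‖) :
    cone l R p u = 0 := by
  simp [cone, h]

lemma cone_lipschitz (l R : ℝ) (p u v : EuclideanSpace ℝ (Fin 2)) :
    |cone l R p u - cone l R p v| ≤ |l| * ‖u - v‖ := by
  rw [cone, cone, ← mul_sub, abs_mul]
  refine mul_le_mul_of_nonneg_left ?_ (abs_nonneg _)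
  have h1 := abs_max_sub_max_le_abs (R - ‖u - p‖) (R - ‖v - p‖) 0
  rw [max_comm 0, max_comm 0]
  refine h1.trans ?_
  have h2 := abs_norm_sub_norm_le (v - p) (u - p)
  rw [sub_sub_sub_cancel_left]
  rw [sub_sub_sub_cancel_right, norm_sub_rev v u] at h2
  exact h2

lemma abs_cone_le {l R : ℝ} (hR : 0 ≤ R) (p u : EuclideanSpace ℝ (Fin 2)) :
    |cone l R p u| ≤ |l| * R := by
  rw [cone, abs_mul]
  refine mul_le_mul_of_nonneg_left ?_ (abs_nonneg _)
  rw [abs_of_nonneg (le_max_left _ _)]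
  exact max_le hR (by linarith [norm_nonneg (u - p)])

lemma norm_le_of_cone_ne_zero {l R : ℝ} {p u : EuclideanSpace ℝ (Fin 2)}
    (h : cone l R p u ≠ 0) : ‖u‖ ≤ ‖p‖ + R := by
  have h1 : ‖u - p‖ < R := by
    by_contra! hc
    exact h (cone_eq_zero hc)
  linarith [norm_le_norm_add_norm_sub' u p]

/-- Growth of the squared norm. The two squared terms are the coordinates of the new value when the
slope at the third stage is amplified by `1 + θ`, with `θ b₃ = h² κ` and `κ = 1 / (1 - c)`. -/
lemma one_lt_sq_add_sq {h κ c m : ℝ} (h0 : 0 < h) (hκ : κ * (1 - c) = 1)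
    (hh : h ^ 2 * (|2 * κ * (c / 2 - 1 / 6 - m)| + |κ * m / 3|) ≤ 1) (h1 : h ≤ 1) :
    1 < (1 - h ^ 2 / 2 - h ^ 2 * κ * h ^ 2 * c) ^ 2
      + (h + h * (h ^ 2 * κ) - h ^ 3 / 6 - h ^ 3 * (h ^ 2 * κ) * m) ^ 2 := by
  set E := 2 * κ * (c / 2 - 1 / 6 - m) with hE
  set F := κ * m / 3 with hF
  have hs1 : h ^ 2 ≤ 1 := pow_le_one₀ h0.le h1
  have hE' : -|E| ≤ E := neg_abs_le _
  have hF' : -|F| ≤ F := neg_abs_le _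
  have e1 : h ^ 2 * (-|E|) ≤ h ^ 2 * E := mul_le_mul_of_nonneg_left hE' (by positivity)
  have e2 : h ^ 2 * h ^ 2 * (-|F|) ≤ h ^ 2 * h ^ 2 * F :=
    mul_le_mul_of_nonneg_left hF' (by positivity)
  have e3 : h ^ 2 * h ^ 2 * |F| ≤ h ^ 2 * 1 * |F| := by gcongr
  have e4 : 0 < 23 / 12 + h ^ 2 * E + h ^ 2 * h ^ 2 * F := by linarith
  have e5 : 0 < h ^ 4 * (23 / 12 + h ^ 2 * E + h ^ 2 * h ^ 2 * F) := by positivity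
  have id : (1 - h ^ 2 / 2 - h ^ 2 * κ * h ^ 2 * c) ^ 2
      + (h + h * (h ^ 2 * κ) - h ^ 3 / 6 - h ^ 3 * (h ^ 2 * κ) * m) ^ 2
      = 1 + h ^ 4 * (23 / 12 + h ^ 2 * E + h ^ 2 * h ^ 2 * F) + h ^ 6 / 36
        + (h ^ 2 * κ * h ^ 2 * c) ^ 2 + (h * (h ^ 2 * κ) - h ^ 3 * (h ^ 2 * κ) * m) ^ 2 := by
    rw [hE, hF]
    linear_combination (2 * h ^ 4) * hκ
  rw [id]
  have : 0 < h ^ 6 := by positivity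
  nlinarith [sq_nonneg (h ^ 2 * κ * h ^ 2 * c),
    sq_nonneg (h * (h ^ 2 * κ) - h ^ 3 * (h ^ 2 * κ) * m)]

lemma abs_coord_le_norm (u : EuclideanSpace ℝ (Fin 2)) (i : Fin 2) : |u i| ≤ ‖u‖ := by
  simpa using PiLp.norm_apply_le u i

/-- There is no explicit three-stage Runge–Kutta method with
nonnegative coefficients that satisfies the third-order conditions and is
strongly stable for all semibounded Lipschitz-continuous right-hand sides. -/
theorem no_erk33_ssp_third_order_strongly_stable (a21 a31 a32 b1 b2 b3 : ℝ)
    (ha21 : 0 ≤ a21) (ha31 : 0 ≤ a31) (ha32 : 0 ≤ a32)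
    (hb1 : 0 ≤ b1) (hb2 : 0 ≤ b2) (hb3 : 0 ≤ b3)
    (h1 : b1 + b2 + b3 = 1)
    (h2 : b2 * a21 + b3 * (a31 + a32) = 1 / 2)
    (h3 : b2 * a21 ^ 2 + b3 * (a31 + a32) ^ 2 = 1 / 3)
    (h4 : b3 * a32 * a21 = 1 / 6)
    (hstable : ∀ L : ℝ, 0 < L → ∃ τ : ℝ, 0 < τ ∧
      ∀ g : EuclideanSpace ℝ (Fin 2) → EuclideanSpace ℝ (Fin 2),
        (∀ u, ⟪u, g u⟫ ≤ 0) →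
        (∀ u v, ‖g u - g v‖ ≤ L * ‖u - v‖) →
        ∀ u₀ : EuclideanSpace ℝ (Fin 2), ∀ Δt : ℝ, 0 < Δt → Δt ≤ τ →
          ‖rk3Step a21 a31 a32 b1 b2 b3 g Δt u₀‖ ≤ ‖u₀‖) :
    False := by
  set c := a31 + a32 with hc
  set m := a32 * a21 with hm
  have hc1 : c ≠ 1 := third_node_ne_one ha21 ha31 hb2 hb3 h2 h3 h4
  have hbm : b3 * m = 1 / 6 := by rw [hm, ← h4]; ring
  have hm0 : 0 < m := by
    refine lt_of_le_of_ne (mul_nonneg ha32 ha21) fun h => ?_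
    rw [← h] at hbm
    norm_num at hbm
  have hb3p : 0 < b3 := by
    refine lt_of_le_of_ne hb3 fun h => ?_
    rw [← h] at h4
    norm_num at h4
  have hc0 : 0 < c := by
    have : a32 ≠ 0 := by
      rintro h
      rw [h] at h4
      norm_num at h4
    have := lt_of_le_of_ne ha32 this.symm
    linarith
  set r := min c m with hr
  have hr0 : 0 < r := lt_min hc0 hm0
  set κ := 1 / (1 - c) with hκ
  have hκ1 : κ * (1 - c) = 1 := by
    rw [hκ]
    exact div_mul_cancel₀ _ (sub_ne_zero.mpr hc1.symm)
  -- Slope for which the cone of radius `r h²` has height `h² κ / b₃`.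
  set l := κ / (b3 * r) with hl
  obtain ⟨τ, hτ, hst⟩ := hstable (1 + |l| * r + |l| * (1 + m + c + r)) (by positivity)
  set S := |2 * κ * (c / 2 - 1 / 6 - m)| + |κ * m / 3| with hS
  have hS0 : 0 ≤ S := by positivity
  obtain ⟨h, h0, hhτ, hh1⟩ : ∃ h : ℝ, 0 < h ∧ h ≤ τ ∧ h ≤ 1 / (1 + S) :=
    ⟨min τ (1 / (1 + S)), lt_min hτ (by positivity), min_le_left _ _, min_le_right _ _⟩
  have hhS : h * (1 + S) ≤ 1 := (le_div_iff₀ (by positivity)).1 hh1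
  have hhS' : 0 ≤ h * S := by positivity
  have hle1 : h ≤ 1 := by linarith
  have hhh : h ^ 2 ≤ h := by
    rw [sq]
    exact mul_le_of_le_one_left h0.le hle1
  have hsq1 : h ^ 2 ≤ 1 := hhh.trans hle1
  have hhS2 : h ^ 2 * S ≤ 1 := by linarith [mul_le_mul_of_nonneg_right hhh hS0]
  set p : EuclideanSpace ℝ (Fin 2) := !₂[1 - h ^ 2 * m, h * c] with hp
  set ψ := cone l (r * h ^ 2) p with hψ
  set g : EuclideanSpace ℝ (Fin 2) → EuclideanSpace ℝ (Fin 2) :=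
    fun u => (1 + ψ u) • rot u with hg
  set u1 : EuclideanSpace ℝ (Fin 2) := !₂[1, 0] with hu1
  set u2 : EuclideanSpace ℝ (Fin 2) := !₂[1, h * a21] with hu2
  have hR0 : 0 ≤ r * h ^ 2 := by positivity
  have hR1 : r * h ^ 2 ≤ r := mul_le_of_le_one_right hr0.le hsq1
  have hpn : ‖p‖ ≤ 1 + m + c := by
    have e : ‖p‖ ^ 2 = (1 - h ^ 2 * m) ^ 2 + (h * c) ^ 2 := by
      simp [EuclideanSpace.norm_sq_eq, Fin.sum_univ_two, hp]
    have i1 : h ^ 2 * m ≤ m := mul_le_of_le_one_left hm0.le hsq1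
    have i2 : h * c ≤ c := mul_le_of_le_one_left hc0.le hle1
    have i3 : 0 ≤ h ^ 2 * m := by positivity
    have i4 : 0 ≤ h * c := by positivity
    refine le_of_sq_le_sq (a := ‖p‖) ?_ (by positivity)
    have i5 : (1 - h ^ 2 * m) ^ 2 ≤ (1 + m) ^ 2 := sq_le_sq' (by linarith) (by linarith)
    have i6 : (h * c) ^ 2 ≤ c ^ 2 := pow_le_pow_left₀ i4 i2 2
    have i7 : 0 ≤ (1 + m) * c := by positivity
    rw [e]
    linarith
  have hψ1 : ψ u1 = 0 := by
    refine cone_eq_zero ?_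
    have e := abs_coord_le_norm (u1 - p) 1
    have e' : |(u1 - p) 1| = h * c := by
      simp [hu1, hp, abs_of_pos h0, abs_of_pos hc0]
    have : r * h ^ 2 ≤ c * h := mul_le_mul (min_le_left _ _) hhh (by positivity) hc0.le
    linarith
  have hψ2 : ψ u2 = 0 := by
    refine cone_eq_zero ?_
    have e := abs_coord_le_norm (u2 - p) 0
    have e' : |(u2 - p) 0| = h ^ 2 * m := by
      simp [hu2, hp, abs_of_pos hm0]
    have : r * h ^ 2 ≤ m * h ^ 2 := mul_le_mul_of_nonneg_right (min_le_right _ _) (by positivity)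
    linarith
  have hψ3 : b3 * ψ p = h ^ 2 * κ := by
    simp only [hψ, cone, sub_self, norm_zero, sub_zero, max_eq_right hR0, hl]
    field_simp
  have hsemi : ∀ u, ⟪u, g u⟫ ≤ 0 := fun u => by
    simp only [hg, inner_smul_right, inner_rot, mul_zero, le_refl]
  have hlip : ∀ u v, ‖g u - g v‖ ≤ (1 + |l| * r + |l| * (1 + m + c + r)) * ‖u - v‖ := by
    refine lipschitz_rot_field (by positivity)
      (cone_lipschitz l (r * h ^ 2) p) (fun u => ?_) (fun u hu => ?_)
    · exact (abs_cone_le hR0 p u).trans (mul_le_mul_of_nonneg_left hR1 (abs_nonneg _))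
    · linarith [norm_le_of_cone_ne_zero hu]
  have hstep := hst g hsemi hlip u1 h h0 hhτ
  have g1 : g u1 = !₂[0, 1] := by
    simp only [hg, hψ1]
    ext i
    fin_cases i <;> simp [rot, hu1]
  have g2 : g u2 = !₂[-(h * a21), 1] := by
    simp only [hg, hψ2]
    ext i
    fin_cases i <;> simp [rot, hu2]
  have g3 : g p = !₂[-((1 + ψ p) * (h * c)), (1 + ψ p) * (1 - h ^ 2 * m)] := by
    ext i
    fin_cases i <;> simp [hg, rot, hp]
  have s2 : u1 + h • (a21 • g u1) = u2 := by
    rw [g1]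
    ext i
    fin_cases i <;> simp [hu1, hu2]
  have s3 : u1 + h • (a31 • g u1 + a32 • g u2) = p := by
    rw [g1, g2]
    ext i
    fin_cases i <;> simp [hu1, hp, hc, hm] <;> ring
  have hfin : rk3Step a21 a31 a32 b1 b2 b3 g h u1
      = !₂[1 - h ^ 2 / 2 - h ^ 2 * κ * h ^ 2 * c,
        h + h * (h ^ 2 * κ) - h ^ 3 / 6 - h ^ 3 * (h ^ 2 * κ) * m] := by
    simp only [rk3Step]
    rw [s2, s3, g1, g2, g3]
    ext i
    fin_cases i
    · simp [hu1]
      linear_combination (-h ^ 2) * h2 - h ^ 2 * c * hψ3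
    · simp [hu1]
      linear_combination h * h1 + (h - h ^ 3 * m) * hψ3 - h ^ 3 * hbm
  have hn1 : ‖u1‖ ^ 2 = 1 := by
    simp [EuclideanSpace.norm_sq_eq, Fin.sum_univ_two, hu1]
  have hn2 := pow_le_pow_left₀ (norm_nonneg _) hstep 2
  rw [hn1, hfin, EuclideanSpace.norm_sq_eq, Fin.sum_univ_two] at hn2
  simp only [Real.norm_eq_abs, sq_abs] at hn2
  have hbig := one_lt_sq_add_sq h0 hκ1 hhS2 hle1
  simp at hn2
  linarith
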